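/- Let A₁ ∈ M_{n₁}(ℍ), …, A_k ∈ M_{n_k}(ℍ) and suppose that each numerical range W(Aᵢ) is a convex subset of ℍ (viewed as the 4-dimensional real vector space). Then the numerical range of the block-diagonal direct sum equals the convex hull of the union: W(A₁ ⊕ ⋯ ⊕ A_k) = conv(W(A₁) ∪ ⋯ ∪ W(A_k)). -/

import Mathlib

/-- The quaternionic numerical range of a square quaternionic matrix. -/
def qnr {ι : Type*} [Fintype ι] [DecidableEq ι] (A : Matrix ι ι (Quaternion ℝ)) :
    Set (Quaternion ℝ) :=
  {q | ∃ x : ι → Quaternion ℝ, (∑ i, ‖x i‖ ^ 2) = 1 ∧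
    q = ∑ i, ∑ j, star (x i) * A i j * x j}

/-- The quadratic form. -/
noncomputable def qForm {ι : Type*} [Fintype ι] (A : Matrix ι ι (Quaternion ℝ)) (x : ι → Quaternion ℝ) :
    Quaternion ℝ := ∑ i, ∑ j, star (x i) * A i j * x j

/-- Squared norm. -/
noncomputable def qSq {ι : Type*} [Fintype ι] (x : ι → Quaternion ℝ) : ℝ := ∑ i, ‖x i‖ ^ 2

theorem qSq_nonneg' {ι : Type*} [Fintype ι] (x : ι → Quaternion ℝ) : 0 ≤ qSq x :=
  Finset.sum_nonneg fun _ _ => by positivity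

theorem qForm_smul {ι : Type*} [Fintype ι] (A : Matrix ι ι (Quaternion ℝ))
    (c : ℝ) (x : ι → Quaternion ℝ) : qForm A (c • x) = (c ^ 2) • qForm A x := by
  simp only [qForm, Finset.smul_sum]
  refine Finset.sum_congr rfl fun i _ => Finset.sum_congr rfl fun j _ => ?_
  simp only [Pi.smul_apply, Quaternion.star_smul, smul_mul_assoc, mul_smul_comm, smul_smul, sq]

theorem qSq_smul {ι : Type*} [Fintype ι] (c : ℝ) (x : ι → Quaternion ℝ) :
    qSq (c • x) = c ^ 2 * qSq x := by
  simp only [qSq, Finset.mul_sum]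
  refine Finset.sum_congr rfl fun i _ => ?_
  rw [Pi.smul_apply, norm_smul, mul_pow, Real.norm_eq_abs, sq_abs]

theorem qForm_eq_zero {ι : Type*} [Fintype ι] (A : Matrix ι ι (Quaternion ℝ))
    (x : ι → Quaternion ℝ) (h : qSq x = 0) : qForm A x = 0 := by
  have h1 := (Finset.sum_eq_zero_iff_of_nonneg (fun i _ => by positivity)).1 h
  have h2 : ∀ i, x i = 0 := fun i => by simpa using h1 i (Finset.mem_univ i)
  simp [qForm, h2]

theorem mem_qnr_iff {ι : Type*} [Fintype ι] [DecidableEq ι] (A : Matrix ι ι (Quaternion ℝ))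
    (q : Quaternion ℝ) : q ∈ qnr A ↔ ∃ x, qSq x = 1 ∧ q = qForm A x := Iff.rfl

theorem inv_smul_mem {ι : Type*} [Fintype ι] [DecidableEq ι] (A : Matrix ι ι (Quaternion ℝ))
    (x : ι → Quaternion ℝ) (h : qSq x ≠ 0) : (qSq x)⁻¹ • qForm A x ∈ qnr A := by
  have hp : 0 ≤ (qSq x)⁻¹ := inv_nonneg.2 (qSq_nonneg' x)
  refine (mem_qnr_iff A _).2 ⟨Real.sqrt (qSq x)⁻¹ • x, ?_, ?_⟩
  · rw [qSq_smul, Real.sq_sqrt hp, inv_mul_cancel₀ h]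
  · rw [qForm_smul, Real.sq_sqrt hp]

theorem qcombine {ι : Type*} [Fintype ι] [DecidableEq ι] (A : Matrix ι ι (Quaternion ℝ))
    (hA : Convex ℝ (qnr A)) (x y : ι → Quaternion ℝ) (a b : ℝ) (ha : 0 ≤ a) (hb : 0 ≤ b) :
    ∃ z, qSq z = a * qSq x + b * qSq y ∧ qForm A z = a • qForm A x + b • qForm A y := by
  by_cases hx : qSq x = 0
  · refine ⟨Real.sqrt b • y, ?_, ?_⟩
    · rw [qSq_smul, Real.sq_sqrt hb, hx]; ring
    · rw [qForm_smul, Real.sq_sqrt hb, qForm_eq_zero A x hx]; simp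
  by_cases hy : qSq y = 0
  · refine ⟨Real.sqrt a • x, ?_, ?_⟩
    · rw [qSq_smul, Real.sq_sqrt ha, hy]; ring
    · rw [qForm_smul, Real.sq_sqrt ha, qForm_eq_zero A y hy]; simp
  have h1 : 0 ≤ a * qSq x := mul_nonneg ha (qSq_nonneg' x)
  have h2 : 0 ≤ b * qSq y := mul_nonneg hb (qSq_nonneg' y)
  by_cases hs : a * qSq x + b * qSq y = 0
  · have ha0 : a = 0 := by
      have : a * qSq x = 0 := by linarith
      simpa [hx] using this
    have hb0 : b = 0 := by
      have : b * qSq y = 0 := by linarith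
      simpa [hy] using this
    exact ⟨0, by simp [qSq, ha0, hb0], by simp [qForm, ha0, hb0]⟩
  have hs0 : 0 ≤ a * qSq x + b * qSq y := add_nonneg h1 h2
  have key := hA (inv_smul_mem A x hx) (inv_smul_mem A y hy)
    (div_nonneg h1 hs0) (div_nonneg h2 hs0) (by rw [← add_div, div_self hs])
  obtain ⟨z, hz, hz2⟩ := (mem_qnr_iff A _).1 key
  refine ⟨Real.sqrt (a * qSq x + b * qSq y) • z, ?_, ?_⟩
  · rw [qSq_smul, Real.sq_sqrt hs0, hz, mul_one]
  · rw [qForm_smul, Real.sq_sqrt hs0, ← hz2, smul_add, smul_smul, smul_smul, smul_smul, smul_smul]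
    congr 2 <;> field_simp

theorem qSq_sigma {k : ℕ} {n : Fin k → ℕ} (x : (Σ i, Fin (n i)) → Quaternion ℝ) :
    qSq x = ∑ i, qSq (fun j => x ⟨i, j⟩) := by
  simp only [qSq, Fintype.sum_sigma]

theorem qForm_sigma {k : ℕ} {n : Fin k → ℕ}
    (A : ∀ i : Fin k, Matrix (Fin (n i)) (Fin (n i)) (Quaternion ℝ))
    (x : (Σ i, Fin (n i)) → Quaternion ℝ) :
    qForm (Matrix.blockDiagonal' A) x = ∑ i, qForm (A i) (fun j => x ⟨i, j⟩) := by
  simp only [qForm, Fintype.sum_sigma]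
  refine Finset.sum_congr rfl fun i _ => Finset.sum_congr rfl fun j _ => ?_
  rw [Finset.sum_eq_single i]
  · simp [Matrix.blockDiagonal'_apply_eq]
  · intro i' _ h
    refine Finset.sum_eq_zero fun j' _ => ?_
    rw [Matrix.blockDiagonal'_apply_ne A j j' h.symm]; simp
  · simp

/-- If each `W(Aᵢ)` is convex, then the numerical range of the block-diagonal
direct sum `A₁ ⊕ ⋯ ⊕ A_k` equals the convex hull of the union of the `W(Aᵢ)`. -/
theorem qnr_blockDiagonal_eq_convexHull (k : ℕ) (n : Fin k → ℕ)
    (A : ∀ i : Fin k, Matrix (Fin (n i)) (Fin (n i)) (Quaternion ℝ))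
    (hconv : ∀ i, Convex ℝ (qnr (A i))) :
    qnr (Matrix.blockDiagonal' A) = convexHull ℝ (⋃ i, qnr (A i)) := by
  classical
  apply Set.Subset.antisymm
  · intro q hq
    obtain ⟨x, hx, rfl⟩ := (mem_qnr_iff _ _).1 hq
    rw [qSq_sigma] at hx
    rw [qForm_sigma]
    have e : ∑ i, qForm (A i) (fun j => x ⟨i, j⟩) =
        ∑ i ∈ Finset.univ.filter (fun i => qSq (fun j => x ⟨i, j⟩) ≠ 0),
          qSq (fun j => x ⟨i, j⟩) •
            ((qSq (fun j => x ⟨i, j⟩))⁻¹ • qForm (A i) (fun j => x ⟨i, j⟩)) := by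
      rw [Finset.sum_filter]
      refine Finset.sum_congr rfl fun i _ => ?_
      split_ifs with h
      · rw [smul_smul, mul_inv_cancel₀ h, one_smul]
      · exact qForm_eq_zero _ _ (not_not.1 h)
    rw [e]
    refine (convex_convexHull ℝ _).sum_mem (fun i _ => qSq_nonneg' _) ?_ ?_
    · rw [Finset.sum_filter_ne_zero, hx]
    · intro i hi
      exact subset_convexHull ℝ _ (Set.mem_iUnion.2
        ⟨i, inv_smul_mem _ _ (Finset.mem_filter.1 hi).2⟩)
  · refine convexHull_min ?_ ?_
    · refine Set.iUnion_subset fun i q hq => ?_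
      obtain ⟨x, hx, rfl⟩ := (mem_qnr_iff _ _).1 hq
      refine (mem_qnr_iff _ _).2
        ⟨fun p => (Pi.single i x : ∀ i, Fin (n i) → Quaternion ℝ) p.1 p.2, ?_, ?_⟩
      · rw [qSq_sigma, Finset.sum_eq_single i]
        · simpa using hx
        · intro j _ h
          simp [qSq, Pi.single_eq_of_ne h]
        · simp
      · rw [qForm_sigma, Finset.sum_eq_single i]
        · simp
        · intro j _ h
          simp [qForm, Pi.single_eq_of_ne h]
        · simp
    · intro q hq r hr a b ha hb hab
      obtain ⟨x, hx, rfl⟩ := (mem_qnr_iff _ _).1 hq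
      obtain ⟨y, hy, rfl⟩ := (mem_qnr_iff _ _).1 hr
      choose z hz hz2 using fun i => qcombine (A i) (hconv i)
        (fun j => x ⟨i, j⟩) (fun j => y ⟨i, j⟩) a b ha hb
      refine (mem_qnr_iff _ _).2 ⟨fun p => z p.1 p.2, ?_, ?_⟩
      · rw [qSq_sigma] at hx hy ⊢
        simp only [hz]
        rw [Finset.sum_add_distrib, ← Finset.mul_sum, ← Finset.mul_sum, hx, hy]
        linarith
      · simp only [qForm_sigma, hz2]
        rw [Finset.sum_add_distrib, ← Finset.smul_sum, ← Finset.smul_sum]
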